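/- Let p_1, p_2, p_3 ∈ ℝ² be the vertices of an equilateral triangle, L_i(t) = (t+p_i)/2, and let SG be the unique nonempty compact set with SG = L_1(SG) ∪ L_2(SG) ∪ L_3(SG). Then the Hausdorff dimension of SG equals log 3 / log 2. -/

import Mathlib

noncomputable section

/-- Points of the plane ℝ². -/
abbrev E2 := EuclideanSpace ℝ (Fin 2)

/-- The contraction `L_i(t) = (t + p_i)/2` of the plane towards the vertex `p i`. -/
def Lmap (p : Fin 3 → E2) (i : Fin 3) (t : E2) : E2 := (2 : ℝ)⁻¹ • (t + p i)

/-- `p 1, p 2, p 3` are the vertices of an equilateral triangle: pairwise distinct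
points with all three pairwise distances equal. -/
def IsEquilateral (p : Fin 3 → E2) : Prop :=
  Function.Injective p ∧
    ∀ i j k l : Fin 3, i ≠ j → k ≠ l → dist (p i) (p j) = dist (p k) (p l)

/-- `S` is the Sierpiński gasket with vertex set `p`: the unique nonempty compact set
invariant under the three contractions `L_i(t) = (t + p_i)/2`. -/
def IsSG (p : Fin 3 → E2) (S : Set E2) : Prop :=
  IsEquilateral p ∧ S.Nonempty ∧ IsCompact S ∧ S = ⋃ i : Fin 3, Lmap p i '' S

/-- For a word `ω = ω₁ω₂…ω_n` over `I = {1,2,3}`, the composition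
`L_ω = L_{ω₁} ∘ L_{ω₂} ∘ ⋯ ∘ L_{ω_n}`. -/
def wordMap (p : Fin 3 → E2) {n : ℕ} (ω : Fin n → Fin 3) : E2 → E2 :=
  (List.ofFn fun k => Lmap p (ω k)).foldr (· ∘ ·) id

/-!
The upper bound uses the natural covers by the `3 ^ n` cells of generation `n`, which are copies of
the gasket scaled by `2⁻¹ ^ n`. For the lower bound, the uniform measure on infinite words is
transported to the gasket: as soon as every set of diameter at most `2⁻¹ ^ n` meets a bounded number
of cells of generation `n`, it has mass at most a constant times `(2⁻¹ ^ n) ^ d`, and the mass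
distribution principle applies. The overlap is bounded because the cell of the word `w` is
`2⁻¹ ^ n • (∑ j, c j • p j + S)`, where the digits of `c j` in base two mark the positions of the
letter `j` in `w`: the word can be read off from the integer vector `c`, and affine independence
of `p` confines the `c` of cells which are close to each other to a box of bounded size.
-/

open MeasureTheory ProbabilityTheory Set Filter Topology Metric
open scoped ENNReal NNReal

section MassDistribution

variable {X : Type*} [EMetricSpace X]

lemma measure_le_mul_ediam_rpow_of_le_pow (μ : OuterMeasure X) {r : ℝ≥0} (hr₀ : r ≠ 0) (hr₁ : r < 1)
    {d : ℝ} (hd : 0 ≤ d) {C : ℝ≥0∞} (hC : C ≠ ∞)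
    (hμ : ∀ (n : ℕ) (A : Set X), ediam A ≤ r ^ n → μ A ≤ C * (r ^ n : ℝ≥0∞) ^ d)
    {A : Set X} (hA : ediam A ≤ 1) : μ A ≤ C / (r : ℝ≥0∞) ^ d * ediam A ^ d := by
  have hrd : (r : ℝ≥0∞) ^ d ≤ 1 := ENNReal.rpow_le_one (by exact_mod_cast hr₁.le) hd
  lift ediam A to ℝ≥0 using ne_top_of_le_ne_top ENNReal.one_ne_top hA with δ hδ
  obtain rfl | hpos := eq_zero_or_pos δ
  · have hlim : Tendsto (fun n : ℕ ↦ C * (r ^ n : ℝ≥0∞) ^ d) atTop (𝓝 (C * 0 ^ d)) :=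
      ENNReal.Tendsto.const_mul ((ENNReal.continuous_rpow_const.tendsto 0).comp
        (ENNReal.tendsto_pow_atTop_nhds_zero_of_lt_one (by exact_mod_cast hr₁))) (.inr hC)
    calc μ A ≤ C * 0 ^ d := ge_of_tendsto' hlim fun n ↦ hμ n A (by simp [← hδ])
      _ ≤ C / (r : ℝ≥0∞) ^ d * 0 ^ d := by gcongr; simpa using ENNReal.div_le_div_left hrd C
  · obtain ⟨n, hlt, hle⟩ :=
      exists_nat_pow_near_of_lt_one hpos (by exact_mod_cast hA) (pos_iff_ne_zero.2 hr₀) hr₁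
    calc μ A ≤ C * (r ^ n : ℝ≥0∞) ^ d := hμ n A (by rw [← hδ]; exact_mod_cast hle)
      _ = C / (r : ℝ≥0∞) ^ d * (r ^ (n + 1) : ℝ≥0∞) ^ d := by
        rw [pow_succ', ENNReal.mul_rpow_of_nonneg _ _ hd, ← mul_assoc,
          ENNReal.div_mul_cancel (by simp [hr₀]) (ENNReal.rpow_ne_top_of_nonneg hd (by simp))]
      _ ≤ C / (r : ℝ≥0∞) ^ d * (δ : ℝ≥0∞) ^ d := by
        gcongr; exact_mod_cast hlt.le

lemma measure_le_mul_hausdorffMeasure [MeasurableSpace X] [BorelSpace X] (μ : OuterMeasure X)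
    {d : ℝ} {C ε : ℝ≥0∞} (hC₀ : C ≠ 0) (hC : C ≠ ∞) (hε : 0 < ε)
    (hμ : ∀ A : Set X, ediam A ≤ ε → μ A ≤ C * ediam A ^ d) (S : Set X) :
    μ S ≤ C * μH[d] S := by
  have hle : C⁻¹ • μ ≤ OuterMeasure.mkMetric fun δ ↦ δ ^ d :=
    OuterMeasure.le_mkMetric _ _ ε hε fun A hA ↦
      (ENNReal.inv_mul_le_iff hC₀ hC).2 (hμ A hA)
  rw [← Measure.mkMetric_toOuterMeasure] at hle
  exact (ENNReal.inv_mul_le_iff hC₀ hC).1 (hle S)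

end MassDistribution

section UniformWords

/-- The law of an infinite word over `ι` whose letters are independent and uniformly distributed. -/
def uniformWordMeasure (ι : Type*) [MeasurableSpace ι] : Measure (ℕ → ι) :=
  Measure.infinitePi fun _ ↦ uniformOn univ

variable {ι : Type*} [Nonempty ι] [MeasurableSpace ι] [MeasurableSingletonClass ι]

instance [Finite ι] : IsProbabilityMeasure (uniformWordMeasure ι) := by
  have := isProbabilityMeasure_uniformOn (finite_univ (α := ι)) univ_nonempty
  unfold uniformWordMeasure
  infer_instance

lemma uniformWordMeasure_setOf_prefix_eq_le [Fintype ι] {n : ℕ} (w : Fin n → ι) :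
    uniformWordMeasure ι {ω | (fun k : Fin n ↦ ω k) = w} ≤ (Fintype.card ι : ℝ≥0∞)⁻¹ ^ n := by
  obtain hw | ⟨ω, rfl⟩ := {ω : ℕ → ι | (fun k : Fin n ↦ ω k) = w}.eq_empty_or_nonempty
  · simp [hw]
  have hcyl : {ω' : ℕ → ι | (fun k : Fin n ↦ ω' k) = fun k : Fin n ↦ ω k} =
      (Finset.range n : Set ℕ).pi fun k ↦ {ω k} := by
    ext ω'
    simp [funext_iff, Fin.forall_iff]
  have := isProbabilityMeasure_uniformOn (finite_univ (α := ι)) univ_nonempty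
  rw [hcyl, uniformWordMeasure, Measure.infinitePi_pi _ fun _ _ ↦ measurableSet_singleton _]
  simp [uniformOn_univ]

end UniformWords

section IteratedFunctionSystem

/-- The composition `f (w 0) ∘ f (w 1) ∘ ⋯ ∘ f (w (n - 1))` of the maps of an iterated function
system along a finite word `w`. The recursion splits off the innermost map, so that the prefixes of
an infinite word give decreasing cells. -/
def wordComp {ι X : Type*} (f : ι → X → X) : {n : ℕ} → (Fin n → ι) → X → X
  | 0, _ => id
  | _ + 1, w => wordComp f (Fin.init w) ∘ f (w (Fin.last _))

/-- Bounded overlap of the cells of an iterated function system at the scales `r ^ n`: there is a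
uniform bound on the number of words `w` of length `n` whose cell `wordComp f w '' S` meets a given
set of diameter at most `r ^ n`. For similarities of ratio `r` this is the form in which the open
set condition enters the computation of the Hausdorff dimension. -/
def HasBoundedOverlap {ι X : Type*} [EMetricSpace X] (f : ι → X → X) (S : Set X) (r : ℝ≥0) : Prop :=
  ∃ M : ℕ, ∀ (n : ℕ) (A : Set X), ediam A ≤ r ^ n →
    {w : Fin n → ι | (wordComp f w '' S ∩ A).Nonempty}.encard ≤ M

variable {ι X : Type*} {f : ι → X → X} {S : Set X}

lemma subset_iUnion_wordComp_image (hS : S ⊆ ⋃ i, f i '' S) (n : ℕ) :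
    S ⊆ ⋃ w : Fin n → ι, wordComp f w '' S := by
  induction n with
  | zero => exact fun x hx ↦ mem_iUnion.2 ⟨Fin.elim0, x, hx, rfl⟩
  | succ n ih =>
    intro x hx
    obtain ⟨w, y, hy, rfl⟩ := mem_iUnion.1 (ih hx)
    obtain ⟨i, z, hz, rfl⟩ := mem_iUnion.1 (hS hy)
    exact mem_iUnion.2 ⟨Fin.snoc w i, z, hz, by simp [wordComp]⟩

lemma wordComp_image_subset_init (hf : ∀ i, MapsTo (f i) S S) {n : ℕ} (w : Fin (n + 1) → ι) :
    wordComp f w '' S ⊆ wordComp f (Fin.init w) '' S := by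
  rw [wordComp, image_comp]
  exact image_mono (hf _).image_subset

lemma continuous_wordComp [TopologicalSpace X] (hf : ∀ i, Continuous (f i)) {n : ℕ}
    (w : Fin n → ι) : Continuous (wordComp f w) := by
  induction n with
  | zero => exact continuous_id
  | succ n ih => exact (ih _).comp (hf _)

lemma exists_forall_mem_wordComp_image [TopologicalSpace X] [T2Space X] (hS : IsCompact S)
    (hne : S.Nonempty) (hf : ∀ i, Continuous (f i)) (hfS : ∀ i, MapsTo (f i) S S) (ω : ℕ → ι) :
    ∃ x, ∀ n, x ∈ wordComp f (fun k : Fin n ↦ ω k) '' S := by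
  have hcompact (n : ℕ) : IsCompact (wordComp f (fun k : Fin n ↦ ω k) '' S) :=
    hS.image (continuous_wordComp hf _)
  simpa [Set.Nonempty] using IsCompact.nonempty_iInter_of_sequence_nonempty_isCompact_isClosed
    (fun n ↦ wordComp f (fun k : Fin n ↦ ω k) '' S)
    (fun n ↦ wordComp_image_subset_init hfS fun k : Fin (n + 1) ↦ ω k)
    (fun n ↦ hne.image _) (hcompact 0) fun n ↦ (hcompact n).isClosed

lemma lipschitzWith_wordComp [PseudoEMetricSpace X] {r : ℝ≥0} (hf : ∀ i, LipschitzWith r (f i))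
    {n : ℕ} (w : Fin n → ι) : LipschitzWith (r ^ n) (wordComp f w) := by
  induction n with
  | zero => simpa [wordComp] using LipschitzWith.id
  | succ n ih => exact pow_succ r n ▸ (ih _).comp (hf _)

variable [Fintype ι]

lemma uniformWordMeasure_preimage_le [Nonempty ι] [MeasurableSpace ι] [MeasurableSingletonClass ι]
    {π : (ℕ → ι) → X} (hπ : ∀ ω n, π ω ∈ wordComp f (fun k : Fin n ↦ ω k) '' S) (n : ℕ)
    (A : Set X) : uniformWordMeasure ι (π ⁻¹' A) ≤
      {w : Fin n → ι | (wordComp f w '' S ∩ A).Nonempty}.ncard * (Fintype.card ι : ℝ≥0∞)⁻¹ ^ n := by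
  classical
  set W := {w : Fin n → ι | (wordComp f w '' S ∩ A).Nonempty}
  have hcover : π ⁻¹' A ⊆ ⋃ w ∈ W.toFinset, {ω | (fun k : Fin n ↦ ω k) = w} := fun ω hω ↦
    mem_iUnion₂.2 ⟨_, mem_toFinset.2 ⟨π ω, hπ ω n, hω⟩, rfl⟩
  calc uniformWordMeasure ι (π ⁻¹' A)
      ≤ ∑ w ∈ W.toFinset, uniformWordMeasure ι {ω | (fun k : Fin n ↦ ω k) = w} :=
        (measure_mono hcover).trans (measure_biUnion_finset_le _ _)
    _ ≤ ∑ _w ∈ W.toFinset, (Fintype.card ι : ℝ≥0∞)⁻¹ ^ n := by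
        gcongr; exact uniformWordMeasure_setOf_prefix_eq_le _
    _ = W.ncard * (Fintype.card ι : ℝ≥0∞)⁻¹ ^ n := by
        rw [Finset.sum_const, nsmul_eq_mul, ncard_eq_toFinset_card']

variable [EMetricSpace X] {r : ℝ≥0} {d : ℝ}

lemma hausdorffMeasure_le_ediam_rpow [MeasurableSpace X] [BorelSpace X] (hr : r < 1)
    (hf : ∀ i, LipschitzWith r (f i)) (hS : S ⊆ ⋃ i, f i '' S) (hdiam : ediam S ≠ ∞) (hd : 0 ≤ d)
    (hcard : Fintype.card ι * (r : ℝ≥0∞) ^ d ≤ 1) : μH[d] S ≤ ediam S ^ d := by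
  have hcell (n : ℕ) (w : Fin n → ι) : ediam (wordComp f w '' S) ≤ r ^ n * ediam S := by
    simpa using (lipschitzWith_wordComp hf w).ediam_image_le S
  have hscale : Tendsto (fun n : ℕ ↦ (r : ℝ≥0∞) ^ n * ediam S) atTop (𝓝 0) := by
    simpa using ENNReal.Tendsto.mul_const
      (ENNReal.tendsto_pow_atTop_nhds_zero_of_lt_one (by exact_mod_cast hr)) (.inr hdiam)
  have hsum (n : ℕ) : ∑ w : Fin n → ι, ediam (wordComp f w '' S) ^ d ≤ ediam S ^ d :=
    calc ∑ w : Fin n → ι, ediam (wordComp f w '' S) ^ d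
        ≤ ∑ _w : Fin n → ι, (r ^ n * ediam S) ^ d := by gcongr; exact hcell n _
      _ = (Fintype.card ι * (r : ℝ≥0∞) ^ d) ^ n * ediam S ^ d := by
        rw [ENNReal.mul_rpow_of_nonneg _ _ hd, ← ENNReal.rpow_natCast_mul, mul_comm (n : ℝ) d,
          ENNReal.rpow_mul_natCast, mul_pow]
        simp [mul_assoc]
      _ ≤ ediam S ^ d := mul_le_of_le_one_left' (pow_le_one₀ zero_le hcard)
  calc μH[d] S ≤ liminf (fun n ↦ ∑ w : Fin n → ι, ediam (wordComp f w '' S) ^ d) atTop :=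
        Measure.hausdorffMeasure_le_liminf_sum d S _ hscale _ (.of_forall hcell)
          (.of_forall (subset_iUnion_wordComp_image hS))
    _ ≤ ediam S ^ d := liminf_le_of_frequently_le' (Frequently.of_forall hsum)

lemma hausdorffMeasure_ne_zero [MeasurableSpace X] [BorelSpace X] (hr₀ : r ≠ 0) (hr₁ : r < 1)
    (hf : ∀ i, Continuous (f i)) (hfS : ∀ i, MapsTo (f i) S S) (hS : IsCompact S)
    (hne : S.Nonempty) (hoverlap : HasBoundedOverlap f S r) (hd : 0 ≤ d)
    (hcard : 1 ≤ Fintype.card ι * (r : ℝ≥0∞) ^ d) : μH[d] S ≠ 0 := by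
  obtain ⟨M, hM⟩ := hoverlap
  have : Nonempty ι := by
    by_contra! h
    simp at hcard
  let : MeasurableSpace ι := ⊤
  choose π hπ using exists_forall_mem_wordComp_image hS hne hf hfS
  -- An outer measure suffices, so `π` need not be measurable.
  let μ : OuterMeasure X := .map π (uniformWordMeasure ι).toOuterMeasure
  have hμS : μ S = 1 := by
    have hpre : π ⁻¹' S = univ := eq_univ_of_forall fun ω ↦ by simpa [wordComp] using hπ ω 0
    simp [μ, hpre]
  have hinv : (Fintype.card ι : ℝ≥0∞)⁻¹ ≤ (r : ℝ≥0∞) ^ d :=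
    ENNReal.inv_le_iff_le_mul (by simp) (by simp) |>.2 hcard
  have hμ (n : ℕ) (A : Set X) (hA : ediam A ≤ r ^ n) : μ A ≤ (M + 1) * (r ^ n : ℝ≥0∞) ^ d :=
    calc μ A ≤ M * (Fintype.card ι : ℝ≥0∞)⁻¹ ^ n :=
          (uniformWordMeasure_preimage_le hπ n A).trans <| by
            gcongr; exact (encard_le_coe_iff_finite_ncard_le.1 (hM n A hA)).2
      _ ≤ (M + 1) * (r ^ n : ℝ≥0∞) ^ d := by
          rw [← ENNReal.rpow_natCast_mul, mul_comm (n : ℝ) d, ENNReal.rpow_mul_natCast]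
          gcongr
          exact le_self_add
  have hle := measure_le_mul_hausdorffMeasure μ (C := (M + 1) / (r : ℝ≥0∞) ^ d)
    (ENNReal.div_ne_zero.2 ⟨by simp, ENNReal.rpow_ne_top_of_nonneg hd (by simp)⟩)
    (ENNReal.div_ne_top (by simp) (by simp [hr₀])) one_pos
    (fun A ↦ measure_le_mul_ediam_rpow_of_le_pow μ hr₀ hr₁ hd (by simp) hμ) S
  intro h
  simp [hμS, h] at hle

theorem dimH_eq_of_card_mul_rpow_eq_one {d : ℝ≥0} (hr₀ : r ≠ 0) (hr₁ : r < 1)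
    (hf : ∀ i, LipschitzWith r (f i)) (hSc : IsCompact S) (hdiam : ediam S ≠ ∞) (hne : S.Nonempty)
    (hS : S = ⋃ i, f i '' S) (hoverlap : HasBoundedOverlap f S r)
    (hcard : Fintype.card ι * (r : ℝ≥0∞) ^ (d : ℝ) = 1) : dimH S = d := by
  borelize X
  have hfS (i : ι) : MapsTo (f i) S S :=
    mapsTo_iff_image_subset.2 ((subset_iUnion (fun i ↦ f i '' S) i).trans hS.superset)
  exact dimH_of_hausdorffMeasure_ne_zero_ne_top
    (hausdorffMeasure_ne_zero hr₀ hr₁ (fun i ↦ (hf i).continuous) hfS hSc hne hoverlap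
      d.2 hcard.ge)
    (ne_top_of_le_ne_top (ENNReal.rpow_ne_top_of_nonneg d.2 hdiam)
      (hausdorffMeasure_le_ediam_rpow hr₁ hf hS.subset hdiam d.2 hcard.le))

end IteratedFunctionSystem

section WordCode

variable {ι : Type*} [DecidableEq ι]

/-- The vector of integers whose entry at `j` has base two digits marking the occurrences of the
letter `j` in the word `w`, the last letter being the least significant. -/
def wordCode : {n : ℕ} → (Fin n → ι) → ι → ℤ
  | 0, _ => 0
  | _ + 1, w => 2 * wordCode (Fin.init w) + Pi.single (w (Fin.last _)) 1

lemma wordCode_injective (n : ℕ) : Function.Injective (wordCode : (Fin n → ι) → ι → ℤ) := by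
  induction n with
  | zero => exact Function.injective_of_subsingleton _
  | succ n ih =>
    intro w w' h
    have hlast : w (Fin.last n) = w' (Fin.last n) := by
      by_contra hne
      have := congrFun h (w (Fin.last n))
      simp only [wordCode, Pi.add_apply, Pi.mul_apply, Pi.ofNat_apply, Pi.single_eq_same,
        Pi.single_eq_of_ne hne, add_zero] at this
      omega
    have hinit : Fin.init w = Fin.init w' := ih <| by
      funext j
      simpa [wordCode, hlast] using congrFun h j
    rw [← Fin.snoc_init_self w, ← Fin.snoc_init_self w', hinit, hlast]

lemma sum_wordCode [Fintype ι] {n : ℕ} (w : Fin n → ι) : ∑ j, wordCode w j = 2 ^ n - 1 := by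
  induction n with
  | zero => simp [wordCode]
  | succ n ih =>
    simp only [wordCode, Pi.add_apply, Pi.mul_apply, Pi.ofNat_apply, Finset.sum_add_distrib,
      ← Finset.mul_sum, ih, Finset.sum_pi_single', Finset.mem_univ, ↓reduceIte]
    ring

end WordCode

section MidpointSystem

variable {ι E : Type*} [NormedAddCommGroup E] [NormedSpace ℝ E] {p : ι → E} {S : Set E}

lemma lipschitzWith_midpoint (x : E) : LipschitzWith 2⁻¹ (midpoint ℝ x) :=
  LipschitzWith.of_dist_le_mul fun y z ↦ by
    simpa [div_eq_inv_mul] using dist_midpoint_midpoint_le x y x z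

lemma two_pow_smul_wordComp_midpoint [Fintype ι] [DecidableEq ι] {n : ℕ} (w : Fin n → ι) (x : E) :
    (2 : ℝ) ^ n • wordComp (fun i ↦ midpoint ℝ (p i)) w x =
      ∑ j, (wordCode w j : ℝ) • p j + x := by
  induction n generalizing x with
  | zero => simp [wordComp, wordCode]
  | succ n ih =>
    let i := w (Fin.last n)
    calc (2 : ℝ) ^ (n + 1) • wordComp (fun i ↦ midpoint ℝ (p i)) w x
        = (2 : ℝ) • (∑ j, (wordCode (Fin.init w) j : ℝ) • p j + midpoint ℝ (p i) x) := by
          rw [pow_succ', mul_smul, ← ih]; rfl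
      _ = ∑ j, (2 * wordCode (Fin.init w) j : ℝ) • p j + p i + x := by
          simp [midpoint_eq_smul_add, Finset.smul_sum, mul_smul, add_assoc]
      _ = ∑ j, (wordCode w j : ℝ) • p j + x := by
          simp [wordCode, add_smul, Finset.sum_add_distrib, Pi.single_apply, i]

lemma exists_norm_le_mul_norm_sum_smul [Fintype ι] (hp : AffineIndependent ℝ p) :
    ∃ K : ℝ≥0, ∀ v : ι → ℝ, ∑ j, v j = 0 → ‖v‖ ≤ K * ‖∑ j, v j • p j‖ := by
  -- Adjoining the sum of the coefficients turns affine independence into injectivity.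
  let T : (ι → ℝ) →ₗ[ℝ] E × ℝ :=
    (Fintype.linearCombination ℝ p).prod (Fintype.linearCombination ℝ fun _ ↦ 1)
  have hT : T.ker = ⊥ := by
    refine LinearMap.ker_eq_bot'.2 fun v hv ↦ ?_
    obtain ⟨hcomb, hsum⟩ : ∑ j, v j • p j = 0 ∧ ∑ j, v j = 0 := by
      simpa [T, Fintype.linearCombination_apply] using hv
    exact funext fun j ↦ affineIndependent_iff.1 hp .univ v hsum hcomb j (Finset.mem_univ j)
  obtain ⟨K, -, hK⟩ := T.exists_antilipschitzWith hT
  refine ⟨K, fun v hv ↦ ?_⟩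
  simpa [T, Fintype.linearCombination_apply, hv] using hK.le_mul_norm_sub v 0

lemma exists_abs_wordCode_sub_le [Finite ι] [DecidableEq ι] (hp : AffineIndependent ℝ p)
    (hS : Bornology.IsBounded S) :
    ∃ R : ℕ, ∀ (n : ℕ) (w w' : Fin n → ι), ∀ x ∈ S, ∀ x' ∈ S,
      dist (wordComp (fun i ↦ midpoint ℝ (p i)) w x)
        (wordComp (fun i ↦ midpoint ℝ (p i)) w' x') ≤ 2⁻¹ ^ n →
      ∀ j, |wordCode w j - wordCode w' j| ≤ R := by
  cases nonempty_fintype ι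
  obtain ⟨K, hK⟩ := exists_norm_le_mul_norm_sum_smul hp
  obtain ⟨R, hR⟩ := exists_nat_ge (K * (1 + diam S))
  refine ⟨R, fun n w w' x hx x' hx' hdist j ↦ ?_⟩
  set F := wordComp fun i ↦ midpoint ℝ (p i)
  let v : ι → ℝ := fun j ↦ (wordCode w j : ℝ) - wordCode w' j
  have hv : ∑ j, v j = 0 := by
    have (w : Fin n → ι) : ∑ j, (wordCode w j : ℝ) = 2 ^ n - 1 := mod_cast sum_wordCode w
    simp [v, this]
  have hcomb : ∑ j, v j • p j = (2 : ℝ) ^ n • (F w x - F w' x') - (x - x') := by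
    simp only [v, sub_smul, Finset.sum_sub_distrib, smul_sub, F, two_pow_smul_wordComp_midpoint]
    abel
  have hnorm : ‖∑ j, v j • p j‖ ≤ 1 + diam S :=
    calc ‖∑ j, v j • p j‖ ≤ 2 ^ n * dist (F w x) (F w' x') + dist x x' := by
          rw [hcomb, dist_eq_norm, dist_eq_norm]
          exact (norm_sub_le _ _).trans_eq (by simp [norm_smul])
      _ ≤ 2 ^ n * 2⁻¹ ^ n + diam S := by gcongr; exact dist_le_diam_of_mem hS hx hx'
      _ = 1 + diam S := by rw [← mul_pow]; norm_num
  have hvj : |(wordCode w j : ℝ) - wordCode w' j| ≤ R :=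
    calc |(wordCode w j : ℝ) - wordCode w' j| ≤ ‖v‖ := norm_le_pi_norm v j
      _ ≤ K * ‖∑ j, v j • p j‖ := hK v hv
      _ ≤ K * (1 + diam S) := by gcongr
      _ ≤ R := hR
  exact_mod_cast hvj

lemma hasBoundedOverlap_midpoint [Finite ι] (hp : AffineIndependent ℝ p)
    (hS : Bornology.IsBounded S) : HasBoundedOverlap (fun i ↦ midpoint ℝ (p i)) S 2⁻¹ := by
  classical
  cases nonempty_fintype ι
  obtain ⟨R, hR⟩ := exists_abs_wordCode_sub_le hp hS
  refine ⟨(2 * R + 1) ^ Fintype.card ι, fun n A hA ↦ ?_⟩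
  set W := {w : Fin n → ι | (wordComp (fun i ↦ midpoint ℝ (p i)) w '' S ∩ A).Nonempty}
  obtain hW | ⟨w₀, _, ⟨x₀, hx₀, rfl⟩, hA₀⟩ := W.eq_empty_or_nonempty
  · simp [hW]
  let c := wordCode w₀
  have hbox : ∀ w ∈ W, wordCode w ∈ (Finset.Icc (c - R) (c + R) : Set (ι → ℤ)) := by
    rintro w ⟨_, ⟨x, hx, rfl⟩, hxA⟩
    have hdist := (edist_le_ediam_of_mem hxA hA₀).trans hA
    have habs := hR n w w₀ x hx x₀ hx₀ (by
      rw [edist_nndist] at hdist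
      exact_mod_cast hdist)
    rw [Finset.coe_Icc, mem_Icc, Pi.le_def, Pi.le_def, ← forall_and]
    exact fun j ↦ mem_Icc_iff_abs_le.1 ((abs_sub_comm (c j) (wordCode w j)).trans_le (habs j))
  refine encard_le_coe_iff_finite_ncard_le.2 ⟨toFinite W, ?_⟩
  calc W.ncard ≤ (Finset.Icc (c - R) (c + R) : Set (ι → ℤ)).ncard :=
        ncard_le_ncard_of_injOn wordCode hbox (wordCode_injective n).injOn
    _ = ∏ _j : ι, (2 * R + 1) := by
        rw [ncard_coe_finset, Pi.card_Icc]
        refine Finset.prod_congr rfl fun j _ ↦ ?_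
        simp only [c, Pi.sub_apply, Pi.natCast_apply, Pi.add_apply, Int.card_Icc]
        omega
    _ = (2 * R + 1) ^ Fintype.card ι := by simp

theorem stmt_13_general [Fintype ι] (hp : AffineIndependent ℝ p) (hne : S.Nonempty)
    (hSc : IsCompact S) (hS : S = ⋃ i, midpoint ℝ (p i) '' S) :
    dimH S = ENNReal.ofReal (Real.log (Fintype.card ι) / Real.log 2) := by
  have : Nonempty ι := by
    by_contra! h
    simp [hne.ne_empty] at hS
  have hlog : 0 ≤ Real.log (Fintype.card ι) / Real.log 2 :=
    div_nonneg (Real.log_natCast_nonneg _) (Real.log_nonneg one_le_two)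
  have hpow : (2 : ℝ≥0∞) ^ (Real.log (Fintype.card ι) / Real.log 2) = Fintype.card ι := by
    rw [Real.log_div_log, ← ENNReal.ofReal_ofNat, ENNReal.ofReal_rpow_of_pos two_pos,
      Real.rpow_logb two_pos (by norm_num) (mod_cast Fintype.card_pos), ENNReal.ofReal_natCast]
  refine dimH_eq_of_card_mul_rpow_eq_one (by norm_num) (by norm_num)
    (fun i ↦ lipschitzWith_midpoint (p i)) hSc hSc.isBounded.ediam_ne_top hne hS
    (hasBoundedOverlap_midpoint hp hSc.isBounded) ?_
  rw [Real.coe_toNNReal _ hlog, ENNReal.coe_inv two_ne_zero, ENNReal.inv_rpow, ENNReal.coe_ofNat,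
    hpow, ENNReal.mul_inv_cancel (by simp) (by simp)]

end MidpointSystem

lemma IsEquilateral.affineIndependent {p : Fin 3 → E2} (hp : IsEquilateral p) :
    AffineIndependent ℝ p := by
  have hd : 0 < dist (p 0) (p 1) := dist_pos.2 (hp.1.ne (by decide))
  have h₁₂ : dist (p 1) (p 2) = dist (p 0) (p 1) := hp.2 _ _ _ _ (by decide) (by decide)
  have h₂₀ : dist (p 2) (p 0) = dist (p 0) (p 1) := hp.2 _ _ _ _ (by decide) (by decide)
  rw [affineIndependent_iff_not_collinear_of_ne (i₁ := 0) (i₂ := 1) (i₃ := 2)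
    (by decide) (by decide) (by decide)]
  intro hcol
  rcases hcol.wbtw_or_wbtw_or_wbtw with h | h | h <;>
    linarith [h.dist_add_dist, dist_comm (p 0) (p 2), dist_comm (p 1) (p 0), dist_comm (p 2) (p 1)]

lemma Lmap_eq_midpoint (p : Fin 3 → E2) (i : Fin 3) : Lmap p i = midpoint ℝ (p i) := by
  ext1 t
  rw [Lmap, midpoint_eq_smul_add, invOf_eq_inv, add_comm]

/-- The Hausdorff dimension of the Sierpiński gasket is `log 3 / log 2`. -/
theorem stmt_13 (p : Fin 3 → E2) (SG : Set E2) (hSG : IsSG p SG) :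
    dimH SG = ENNReal.ofReal (Real.log 3 / Real.log 2) := by
  obtain ⟨hp, hne, hSc, hS⟩ := hSG
  simp only [Lmap_eq_midpoint] at hS
  simpa using stmt_13_general hp.affineIndependent hne hSc hS
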